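/- Let G be a graph and S = {v₁,…,v_k} ⊆ V(G), and fix ℓ ≥ 3. Construct G' by adding new vertices v₁',…,v_k', for each i two internally disjoint paths vᵢvᵢ¹vᵢ' and vᵢvᵢ²vᵢ' of length 2 (via new vertices vᵢ¹, vᵢ²), and ℓ−2 new vertices a₁,…,a_{ℓ−2} each joined to all of v₁',…,v_k'. Let S' = {v₁',…,v_k'}. Then G contains two edge-disjoint Steiner trees connecting S if and only if G' contains ℓ pairwise edge-disjoint Steiner trees connecting S'. -/

import Mathlib

open SimpleGraph

def IsSteinerTree {V : Type*} (G : SimpleGraph V) (S : Set V) (T : G.Subgraph) : Prop :=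
  S ⊆ T.verts ∧ T.coe.IsTree

def EdgeDisjointFamily {V : Type*} (G : SimpleGraph V) (S : Set V) {ℓ : ℕ}
    (F : Fin ℓ → G.Subgraph) : Prop :=
  (∀ i, IsSteinerTree G S (F i)) ∧
    ∀ i j, i ≠ j → (F i).edgeSet ∩ (F j).edgeSet = ∅

/-- The graph `G'` obtained from `G` by adding, for each `i : Fin k`, new vertices
`vᵢ' = inr (inl (i,0))`, `vᵢ¹ = inr (inl (i,1))`, `vᵢ² = inr (inl (i,2))` with the two paths
`vᵢvᵢ¹vᵢ'` and `vᵢvᵢ²vᵢ'`, together with `ℓ - 2` vertices `aⱼ = inr (inr j)` each joined to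
all the `vᵢ'`. -/
def pathFanExt {V : Type*} (G : SimpleGraph V) (k ℓ : ℕ) (v : Fin k → V) :
    SimpleGraph (V ⊕ ((Fin k × Fin 3) ⊕ Fin (ℓ - 2))) :=
  SimpleGraph.fromRel (fun x y =>
    (∃ p q : V, x = Sum.inl p ∧ y = Sum.inl q ∧ G.Adj p q) ∨
    (∃ i : Fin k, x = Sum.inl (v i) ∧ y = Sum.inr (Sum.inl (i, 1))) ∨
    (∃ i : Fin k, x = Sum.inr (Sum.inl (i, 1)) ∧ y = Sum.inr (Sum.inl (i, 0))) ∨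
    (∃ i : Fin k, x = Sum.inl (v i) ∧ y = Sum.inr (Sum.inl (i, 2))) ∨
    (∃ i : Fin k, x = Sum.inr (Sum.inl (i, 2)) ∧ y = Sum.inr (Sum.inl (i, 0))) ∨
    (∃ (j : Fin (ℓ - 2)) (i : Fin k),
        x = Sum.inr (Sum.inr j) ∧ y = Sum.inr (Sum.inl (i, 0))))


theorem aux_closed {W : Type*} {G : SimpleGraph W} {T : G.Subgraph} (hT : T.coe.Connected)
    (X : Set W) (hX : ∀ x y, x ∈ X → T.Adj x y → y ∈ X) (r : W) (hr : r ∈ T.verts) (hrX : r ∈ X) :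
    T.verts ⊆ X := by
  intro y hy
  obtain ⟨w⟩ := hT.preconnected ⟨r, hr⟩ ⟨y, hy⟩
  have key : ∀ (a b : T.verts), T.coe.Walk a b → a.1 ∈ X → b.1 ∈ X := by
    intro a b w
    induction w with
    | nil => exact id
    | cons h _ ih => intro ha; exact ih (hX _ _ ha h)
  exact key _ _ w hrX

theorem aux_tree {W : Type*} {G : SimpleGraph W} (H : G.Subgraph) (hH : H.coe.Connected) :
    ∃ T : G.Subgraph, T.verts = H.verts ∧ (∀ x y, T.Adj x y → H.Adj x y) ∧ T.coe.IsTree := by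
  obtain ⟨K, hK, hKt⟩ := hH.exists_isTree_le
  let T : G.Subgraph :=
    { verts := H.verts
      Adj := fun x y => ∃ (hx : x ∈ H.verts) (hy : y ∈ H.verts), K.Adj ⟨x, hx⟩ ⟨y, hy⟩
      adj_sub := by
        rintro x y ⟨hx, hy, h⟩
        exact H.adj_sub (hK h)
      edge_vert := by
        rintro x y ⟨hx, hy, h⟩
        exact hx
      symm := ⟨by
        rintro x y ⟨hx, hy, h⟩
        exact ⟨hy, hx, h.symm⟩⟩ }
  refine ⟨T, rfl, ?_, ?_⟩
  · rintro x y ⟨hx, hy, h⟩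
    exact hK h
  · have : T.coe = K := by
      ext ⟨x, hx⟩ ⟨y, hy⟩
      constructor
      · rintro ⟨_, _, h⟩
        exact h
      · intro h
        exact ⟨hx, hy, h⟩
    rw [this]
    exact hKt

/-- It is enough to find connected subgraphs with disjoint adjacency. -/
theorem aux_family {W : Type*} {G : SimpleGraph W} {S : Set W} {n : ℕ} (H : Fin n → G.Subgraph)
    (hS : ∀ t, S ⊆ (H t).verts) (hc : ∀ t, (H t).coe.Connected)
    (hd : ∀ s t x y, (H s).Adj x y → (H t).Adj x y → s = t) :
    ∃ F : Fin n → G.Subgraph, EdgeDisjointFamily G S F := by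
  choose F hF1 hF2 hF3 using fun t => aux_tree (H t) (hc t)
  refine ⟨F, fun t => ⟨(hF1 t).symm ▸ hS t, hF3 t⟩, ?_⟩
  intro s t hst
  ext e
  induction e using Sym2.ind with
  | _ x y =>
    simp only [Set.mem_inter_iff, Subgraph.mem_edgeSet, Set.mem_empty_iff_false, iff_false]
    rintro ⟨h1, h2⟩
    exact hst (hd s t x y (hF2 _ _ _ h1) (hF2 _ _ _ h2))

theorem aux_disj {W : Type*} {G : SimpleGraph W} {S : Set W} {n : ℕ} {F : Fin n → G.Subgraph}
    (h : EdgeDisjointFamily G S F) (s t : Fin n) (x y : W) (h1 : (F s).Adj x y)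
    (h2 : (F t).Adj x y) : s = t := by
  by_contra hst
  have := h.2 s t hst
  have hm : s(x, y) ∈ (F s).edgeSet ∩ (F t).edgeSet := ⟨h1, h2⟩
  rw [this] at hm
  exact hm

section ext
variable {V : Type*} (G : SimpleGraph V) (k ℓ : ℕ) (v : Fin k → V)

/-- The extension of a subgraph of `G` by the paths through the `s`-th middle vertices. -/
def extP (T : G.Subgraph) (hT : Set.range v ⊆ T.verts) (s : Fin 2) :
    (pathFanExt G k ℓ v).Subgraph where
  verts := {x | match x with
    | .inl p => p ∈ T.verts
    | .inr (.inl (_, a)) => a = 0 ∨ a = s.succ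
    | .inr (.inr _) => False}
  Adj x y := match x, y with
    | .inl p, .inl q => T.Adj p q
    | .inl p, .inr (.inl (i, a)) => p = v i ∧ a = s.succ
    | .inr (.inl (i, a)), .inl p => p = v i ∧ a = s.succ
    | .inr (.inl (i, a)), .inr (.inl (j, b)) =>
        i = j ∧ ((a = s.succ ∧ b = 0) ∨ (a = 0 ∧ b = s.succ))
    | _, _ => False
  adj_sub := by
    rintro (p | ⟨i, a⟩ | j) (q | ⟨i', b⟩ | j') h <;> simp only [pathFanExt] at h ⊢
    · have := T.adj_sub h
      have := this.ne
      simp_all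
    · fin_cases s <;> simp_all
    · fin_cases s <;> simp_all
    · fin_cases s <;> aesop
  edge_vert := by
    rintro (p | ⟨i, a⟩ | j) (q | ⟨i', b⟩ | j') h <;> simp at h ⊢
    · exact T.edge_vert h
    · exact hT ⟨i', h.1.symm⟩
    · exact Or.inr h.2
    · tauto
  symm := ⟨by
    rintro (p | ⟨i, a⟩ | j) (q | ⟨i', b⟩ | j') h <;> simp at h ⊢
    · exact h.symm
    · exact h
    · exact h
    · exact ⟨h.1.symm, by tauto⟩⟩

/-- The star at `a_j`. -/
def extStar (j : Fin (ℓ - 2)) : (pathFanExt G k ℓ v).Subgraph where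
  verts := {x | match x with
    | .inl _ => False
    | .inr (.inl (_, a)) => a = 0
    | .inr (.inr j') => j' = j}
  Adj x y := match x, y with
    | .inr (.inl (_, a)), .inr (.inr j') => a = 0 ∧ j' = j
    | .inr (.inr j'), .inr (.inl (_, a)) => a = 0 ∧ j' = j
    | _, _ => False
  adj_sub := by
    rintro (p | ⟨i, a⟩ | j) (q | ⟨i', b⟩ | j') h <;> simp only [pathFanExt] at h ⊢ <;> simp_all
  edge_vert := by
    rintro (p | ⟨i, a⟩ | j) (q | ⟨i', b⟩ | j') h <;> simp at h ⊢ <;> tauto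
  symm := ⟨by
    rintro (p | ⟨i, a⟩ | j) (q | ⟨i', b⟩ | j') h <;> simp at h ⊢ <;> tauto⟩

theorem extStar_conn (j : Fin (ℓ - 2)) : (extStar G k ℓ v j).coe.Connected := by
  rw [connected_iff_exists_forall_reachable]
  refine ⟨⟨.inr (.inr j), rfl⟩, ?_⟩
  rintro ⟨(p | ⟨i, a⟩ | j'), hx⟩
  · exact hx.elim
  · refine Adj.reachable ?_
    exact ⟨hx, rfl⟩
  · have : j' = j := hx
    subst this
    exact Reachable.refl _

theorem extP_conn (hk : 0 < k) (T : G.Subgraph) (hT : Set.range v ⊆ T.verts) (s : Fin 2)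
    (hc : T.coe.Connected) : (extP G k ℓ v T hT s).coe.Connected := by
  rw [connected_iff_exists_forall_reachable]
  have h0 : v ⟨0, hk⟩ ∈ T.verts := hT ⟨_, rfl⟩
  have hin : ∀ p (hp : p ∈ T.verts), (extP G k ℓ v T hT s).coe.Reachable
      ⟨.inl (v ⟨0, hk⟩), h0⟩ ⟨.inl p, hp⟩ := by
    intro p hp
    let f : T.coe →g (extP G k ℓ v T hT s).coe :=
      ⟨fun x => ⟨.inl x.1, x.2⟩, fun {a b} h => h⟩
    exact (hc.preconnected ⟨_, h0⟩ ⟨p, hp⟩).map f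
  have h1 : ∀ i, (extP G k ℓ v T hT s).coe.Reachable
      ⟨.inl (v ⟨0, hk⟩), h0⟩ ⟨.inr (.inl (i, s.succ)), Or.inr rfl⟩ := by
    intro i
    refine (hin (v i) (hT ⟨i, rfl⟩)).trans (Adj.reachable ?_)
    exact ⟨rfl, rfl⟩
  refine ⟨⟨.inl (v ⟨0, hk⟩), h0⟩, ?_⟩
  rintro ⟨(p | ⟨i, a⟩ | j'), hx⟩
  · exact hin p hx
  · rcases hx with rfl | rfl
    · refine (h1 i).trans (Adj.reachable ?_)
      exact ⟨rfl, Or.inl ⟨rfl, rfl⟩⟩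
    · exact h1 i
  · exact hx.elim

/-- The neighbours of the terminal with index i. -/
def nbr (i : Fin k) : Fin 2 ⊕ Fin (ℓ - 2) → V ⊕ ((Fin k × Fin 3) ⊕ Fin (ℓ - 2))
  | .inl a => .inr (.inl (i, a.succ))
  | .inr j => .inr (.inr j)

theorem nbr_of_adj (i : Fin k) (w) (h : (pathFanExt G k ℓ v).Adj (.inr (.inl (i, 0))) w) :
    ∃ e, w = nbr k ℓ i e := by
  rcases w with p | ⟨i', b⟩ | j
  · simp [pathFanExt] at h
  · simp [pathFanExt] at h
    rcases h.2 with h | h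
    · exact ⟨.inl 0, by simp [nbr, h]⟩
    · exact ⟨.inl 1, by simp [nbr, h]⟩
  · exact ⟨.inr j, rfl⟩

theorem adj_star (j : Fin (ℓ - 2)) (w) (h : (pathFanExt G k ℓ v).Adj (.inr (.inr j)) w) :
    ∃ i, w = .inr (.inl (i, 0)) := by
  rcases w with p | ⟨i', b⟩ | j <;> simp [pathFanExt] at h
  subst h
  exact ⟨i', rfl⟩

theorem adj_mid (i : Fin k) (s : Fin 2) (w)
    (h : (pathFanExt G k ℓ v).Adj (.inr (.inl (i, s.succ))) w) :
    w = .inl (v i) ∨ w = .inr (.inl (i, 0)) := by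
  rcases w with p | ⟨i', b⟩ | j <;> fin_cases s <;> simp [pathFanExt] at h ⊢ <;> aesop

/-- Restriction of a subgraph to `G`. -/
def restr (T : (pathFanExt G k ℓ v).Subgraph) : G.Subgraph where
  verts := {p | .inl p ∈ T.verts}
  Adj p q := T.Adj (.inl p) (.inl q)
  adj_sub := by
    intro p q h
    have := T.adj_sub h
    simp [pathFanExt] at this
    exact this.2.elim id (fun h => h.symm)
  edge_vert := fun h => T.edge_vert h
  symm := ⟨fun _ _ h => T.adj_symm h⟩

/-- The retraction. -/
def retr (i0 : Fin k) : V ⊕ ((Fin k × Fin 3) ⊕ Fin (ℓ - 2)) → V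
  | .inl p => p
  | .inr (.inl (i, _)) => v i
  | .inr (.inr _) => v i0

theorem restr_conn (i0 : Fin k) (T : (pathFanExt G k ℓ v).Subgraph) (hc : T.coe.Connected)
    (hv : ∀ i, .inl (v i) ∈ T.verts)
    (ha : ∀ j w, ¬ T.Adj (.inr (.inr j)) w) : (restr G k ℓ v T).coe.Connected := by
  have hm : ∀ x ∈ T.verts, retr k ℓ v i0 x ∈ (restr G k ℓ v T).verts := by
    rintro (p | ⟨i, a⟩ | j) hx
    · exact hx
    · exact hv i
    · exact hv i0
  have hstep : ∀ x y, T.Adj x y → retr k ℓ v i0 x = retr k ℓ v i0 y ∨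
      (restr G k ℓ v T).Adj (retr k ℓ v i0 x) (retr k ℓ v i0 y) := by
    intro x y h
    have hG := T.adj_sub h
    rcases x with p | ⟨i, a⟩ | j
    · rcases y with q | ⟨i', b⟩ | j'
      · exact Or.inr h
      · left
        simp [pathFanExt, retr] at hG ⊢
        tauto
      · exact (ha _ _ h.symm).elim
    · rcases y with q | ⟨i', b⟩ | j'
      · left
        simp [pathFanExt, retr] at hG ⊢
        rcases hG with h | h <;> exact h.1.symm
      · left
        simp only [retr]
        simp [pathFanExt] at hG
        have : i = i' := by aesop
        rw [this]
      · exact (ha _ _ h.symm).elim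
    · exact (ha _ _ h).elim
  have key : ∀ (a b : T.verts), T.coe.Walk a b → (restr G k ℓ v T).coe.Reachable
      ⟨retr k ℓ v i0 a.1, hm _ a.2⟩ ⟨retr k ℓ v i0 b.1, hm _ b.2⟩ := by
    intro a b w
    induction w with
    | nil => exact Reachable.refl _
    | cons h _ ih =>
      refine Reachable.trans ?_ ih
      rcases hstep _ _ h with h | h
      · simp only [h]; exact Reachable.refl _
      · exact Adj.reachable h
  rw [connected_iff_exists_forall_reachable]
  refine ⟨⟨v i0, hv i0⟩, ?_⟩
  rintro ⟨p, hp⟩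
  obtain ⟨w⟩ := hc.preconnected ⟨.inl (v i0), hv i0⟩ ⟨.inl p, hp⟩
  exact key _ _ w

theorem extP_extP (T T' : G.Subgraph) (hT : Set.range v ⊆ T.verts) (hT' : Set.range v ⊆ T'.verts)
    (a b : Fin 2) (hd : ∀ p q, T.Adj p q → T'.Adj p q → a = b) (x y)
    (hs : (extP G k ℓ v T hT a).Adj x y) (ht : (extP G k ℓ v T' hT' b).Adj x y) : a = b := by
  rcases x with (p | ⟨i, c⟩ | j) <;> rcases y with (q | ⟨i', d⟩ | j')
  · exact hd p q hs ht
  · exact Fin.succ_injective _ (hs.2.symm.trans ht.2)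
  · exact hs.elim
  · exact Fin.succ_injective _ (hs.2.symm.trans ht.2)
  · apply Fin.succ_injective
    have h1 := Fin.succ_ne_zero a
    have h2 := Fin.succ_ne_zero b
    obtain ⟨-, hs⟩ := hs
    obtain ⟨-, ht⟩ := ht
    rcases hs with ⟨hs, hs'⟩ | ⟨hs, hs'⟩ <;> rcases ht with ⟨ht, ht'⟩ | ⟨ht, ht'⟩
    · exact hs.symm.trans ht
    · exact (h1 (hs.symm.trans ht)).elim
    · exact (h2 (ht.symm.trans hs)).elim
    · exact hs'.symm.trans ht'
  · exact hs.elim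
  · exact hs.elim
  · exact hs.elim
  · exact hs.elim

theorem extP_extStar (T : G.Subgraph) (hT : Set.range v ⊆ T.verts)
    (a : Fin 2) (b : Fin (ℓ - 2)) (x y)
    (hs : (extP G k ℓ v T hT a).Adj x y) (ht : (extStar G k ℓ v b).Adj x y) : False := by
  rcases x with (p | ⟨i, c⟩ | j) <;> rcases y with (q | ⟨i', d⟩ | j') <;>
    first | exact hs.elim | exact ht.elim

theorem extStar_extStar (a b : Fin (ℓ - 2)) (x y)
    (hs : (extStar G k ℓ v a).Adj x y) (ht : (extStar G k ℓ v b).Adj x y) : a = b := by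
  rcases x with (p | ⟨i, c⟩ | j) <;> rcases y with (q | ⟨i', d⟩ | j') <;>
    first | exact hs.elim | exact hs.2.symm.trans ht.2

end ext

theorem aux_fwd {V : Type*} (G : SimpleGraph V) (k ℓ : ℕ) (hk : 0 < k) (hl : 3 ≤ ℓ)
    (v : Fin k → V) (hv : Function.Injective v)
    (F : Fin 2 → G.Subgraph) (hF : EdgeDisjointFamily G (Set.range v) F) :
    ∃ F : Fin ℓ → (pathFanExt G k ℓ v).Subgraph,
        EdgeDisjointFamily (pathFanExt G k ℓ v)
          {x | ∃ i : Fin k, x = Sum.inr (Sum.inl (i, 0))} F := by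
  have e : Fin ℓ ≃ Fin 2 ⊕ Fin (ℓ - 2) := Fintype.equivOfCardEq (by simp; omega)
  let K : Fin 2 ⊕ Fin (ℓ - 2) → (pathFanExt G k ℓ v).Subgraph :=
    Sum.elim (fun s => extP G k ℓ v (F s) (hF.1 s).1 s) (fun j => extStar G k ℓ v j)
  refine aux_family (fun t => K (e t)) ?_ ?_ ?_
  · intro t
    rcases e t with s | j
    · rintro _ ⟨i, rfl⟩
      exact Or.inl rfl
    · rintro _ ⟨i, rfl⟩
      exact rfl
  · intro t
    rcases e t with s | j
    · exact extP_conn G k ℓ v hk (F s) (hF.1 s).1 s (hF.1 s).2.1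
    · exact extStar_conn G k ℓ v j
  · intro s t x y hs ht
    apply e.injective
    generalize e s = a at hs
    generalize e t = b at ht
    rcases a with a | a <;> rcases b with b | b
    · exact congrArg _ (extP_extP G k ℓ v _ _ (hF.1 a).1 (hF.1 b).1 a b (aux_disj hF a b) x y hs ht)
    · exact (extP_extStar G k ℓ v _ (hF.1 a).1 a b x y hs ht).elim
    · exact (extP_extStar G k ℓ v _ (hF.1 b).1 b a x y ht hs).elim
    · exact congrArg _ (extStar_extStar G k ℓ v a b x y hs ht)

theorem aux_bwd {V : Type*} (G : SimpleGraph V) (k ℓ : ℕ) (hk : 2 ≤ k) (hl : 3 ≤ ℓ)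
    (v : Fin k → V) (F : Fin ℓ → (pathFanExt G k ℓ v).Subgraph)
    (hF : EdgeDisjointFamily (pathFanExt G k ℓ v)
          {x | ∃ i : Fin k, x = Sum.inr (Sum.inl (i, 0))} F) :
    ∃ F : Fin 2 → G.Subgraph, EdgeDisjointFamily G (Set.range v) F := by
  have hmem : ∀ t i, .inr (.inl (i, 0)) ∈ (F t).verts := fun t i => (hF.1 t).1 ⟨i, rfl⟩
  have hconn : ∀ t, (F t).coe.Connected := fun t => (hF.1 t).2.1
  have hother : ∀ i : Fin k, ∃ i', i' ≠ i := by
    have : Nontrivial (Fin k) := Fin.nontrivial_iff_two_le.2 hk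
    exact fun i => exists_ne i
  have hex : ∀ i t, ∃ e, (F t).Adj (.inr (.inl (i, 0))) (nbr k ℓ i e) := by
    intro i t
    by_contra hno
    push Not at hno
    obtain ⟨i', hi'⟩ := hother i
    have := aux_closed (hconn t) {.inr (.inl (i, 0))} (by
      rintro x y rfl h
      obtain ⟨e, rfl⟩ := nbr_of_adj G k ℓ v i y ((F t).adj_sub h)
      exact (hno e h).elim) _ (hmem t i) rfl (hmem t i')
    simp at this
    exact hi' this
  choose c hc using hex
  have hinj : ∀ i, Function.Injective (c i) := by
    intro i s t h
    have h1 := hc i s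
    rw [h] at h1
    exact aux_disj hF _ _ _ _ h1 (hc i t)
  have hsurj : ∀ i, Function.Surjective (c i) := by
    intro i
    exact ((Fintype.bijective_iff_injective_and_card (c i)).2
      ⟨hinj i, by simp; omega⟩).2
  have huniq : ∀ i t w, (F t).Adj (.inr (.inl (i, 0))) w → w = nbr k ℓ i (c i t) := by
    intro i t w h
    obtain ⟨e, rfl⟩ := nbr_of_adj G k ℓ v i w ((F t).adj_sub h)
    obtain ⟨t', rfl⟩ := hsurj i e
    rw [aux_disj hF _ _ _ _ h (hc i t')]
  have hstar : ∀ i t j, c i t = .inr j → ∀ i', c i' t = .inr j := by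
    intro i t j h i'
    have := aux_closed (hconn t)
      {x | x = .inr (.inr j) ∨ ∃ m, x = .inr (.inl (m, 0)) ∧ c m t = .inr j} (by
      rintro x y (rfl | ⟨m, rfl, hm⟩) hxy
      · obtain ⟨m, rfl⟩ := adj_star G k ℓ v j y ((F t).adj_sub hxy)
        refine Or.inr ⟨m, rfl, ?_⟩
        have := huniq m t _ hxy.symm
        rcases hcm : c m t with a | j'
        · rw [hcm] at this; simp [nbr] at this
        · rw [hcm] at this; simp [nbr] at this; rw [this]
      · left
        rw [huniq m t _ hxy, hm]
        rfl) _ (hmem t i) (Or.inr ⟨i, rfl, h⟩) (hmem t i')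
    rcases this with h | ⟨m, h, hm⟩
    · simp at h
    · simp at h
      rw [h]; exact hm
  let i0 : Fin k := ⟨0, by omega⟩
  choose τ hτ using fun s : Fin 2 => hsurj i0 (.inl s)
  have hmid : ∀ s i, ∃ a, c i (τ s) = .inl a := by
    intro s i
    rcases h : c i (τ s) with a | j
    · exact ⟨a, rfl⟩
    · have := hstar _ _ _ h i0
      rw [hτ] at this
      simp at this
  have hvmem : ∀ s i, .inl (v i) ∈ (F (τ s)).verts := by
    intro s i
    by_contra hno
    obtain ⟨a, ha⟩ := hmid s i
    obtain ⟨i', hi'⟩ := hother i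
    have := aux_closed (hconn (τ s))
      {x | x = .inr (.inl (i, 0)) ∨ x = .inr (.inl (i, a.succ))} (by
      rintro x y (rfl | rfl) hxy
      · right
        rw [huniq i _ _ hxy, ha]
        rfl
      · rcases adj_mid G k ℓ v i a y ((F (τ s)).adj_sub hxy) with rfl | rfl
        · exact (hno ((F (τ s)).edge_vert hxy.symm)).elim
        · exact Or.inl rfl) _ (hmem _ i) (Or.inl rfl) (hmem _ i')
    rcases this with h | h <;> simp at h
    · exact hi' h
    · exact hi' h.1
  refine aux_family (fun s => restr G k ℓ v (F (τ s))) ?_ ?_ ?_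
  · rintro s _ ⟨i, rfl⟩
    exact hvmem s i
  · intro s
    refine restr_conn G k ℓ v i0 _ (hconn _) (hvmem s) ?_
    intro j w h
    obtain ⟨m, rfl⟩ := adj_star G k ℓ v j w ((F _).adj_sub h)
    have := huniq m _ _ h.symm
    obtain ⟨a, ha⟩ := hmid s m
    rw [ha] at this
    simp [nbr] at this
  · intro s t x y hs ht
    have h := aux_disj hF _ _ _ _ hs ht
    have h1 := hτ s
    rw [h, hτ t] at h1
    simpa using h1.symm

theorem aux_one {V : Type*} (G : SimpleGraph V) (v : Fin 1 → V) :
    ∃ F : Fin 2 → G.Subgraph, EdgeDisjointFamily G (Set.range v) F := by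
  refine aux_family (fun _ => G.singletonSubgraph (v 0)) ?_ ?_ ?_
  · rintro t _ ⟨i, rfl⟩
    rw [Subsingleton.elim i 0]
    exact rfl
  · intro t
    exact (Subgraph.singletonSubgraph_connected (v := v 0)).coe
  · intro s t x y h
    exact h.elim

/-- `G` contains two edge-disjoint Steiner trees connecting `S = {v₁, …, v_k}` iff `G'`
contains `ℓ` pairwise edge-disjoint Steiner trees connecting `S' = {v₁', …, v_k'}`. -/
theorem stmt7 {V : Type*} (G : SimpleGraph V) (k ℓ : ℕ) (hk : 0 < k) (hl : 3 ≤ ℓ)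
    (v : Fin k → V) (hv : Function.Injective v) :
    (∃ F : Fin 2 → G.Subgraph, EdgeDisjointFamily G (Set.range v) F) ↔
    (∃ F : Fin ℓ → (pathFanExt G k ℓ v).Subgraph,
        EdgeDisjointFamily (pathFanExt G k ℓ v)
          {x | ∃ i : Fin k, x = Sum.inr (Sum.inl (i, 0))} F) := by
  
  constructor
  · rintro ⟨F, hF⟩
    exact aux_fwd G k ℓ hk hl v hv F hF
  · rintro ⟨F, hF⟩
    rcases Nat.lt_or_ge 1 k with h | h
    · exact aux_bwd G k ℓ h hl v F hF
    · obtain rfl : k = 1 := by omega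
      exact aux_one G v
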